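/- There exist absolute constants C₀, C₁ > 0 such that the following holds: let ξ ∈ (0,1], let G be a d-regular graph on n vertices with d = n^ξ, and suppose G satisfies the δ-small-set α-bipartite density condition for some α ∈ (√d, d] with α ≤ ξ²·d/(log d)² and some δ ∈ (0,1] with δ ≥ C₀·α/d. Set c := 1 − (log α)/(log d) (so that α = d^{1−c}). Then for every probability distribution p₀ on V and every integer t ≥ 4/(c·ξ) + 1, ‖P^t p₀‖₂² ≤ C_δ/n + C₁ / n^{1 + cξ/4}, where C_δ := δ + (5/4)·(1−δ). -/

import Mathlib

open Finset

/-- The random-walk matrix `P = A/d` of a graph `G` (intended: `d`-regular). -/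
noncomputable def walkMatrix {n : ℕ} (G : SimpleGraph (Fin n)) [DecidableRel G.Adj]
    (d : ℕ) : Matrix (Fin n) (Fin n) ℝ :=
  (d : ℝ)⁻¹ • G.adjMatrix ℝ

/-- `p` is a probability distribution on `Fin n`. -/
def IsProbDist {n : ℕ} (p : Fin n → ℝ) : Prop :=
  (∀ v, 0 ≤ p v) ∧ ∑ v, p v = 1

/-- Total variation distance of `p` from the uniform distribution on `Fin n`. -/
noncomputable def tvFromUniform {n : ℕ} (p : Fin n → ℝ) : ℝ :=
  (1 / 2) * ∑ v, |p v - 1 / (n : ℝ)|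

/-- `d_TV(t)`: worst-case total variation distance from uniform after `t` steps
of the random walk. -/
noncomputable def dTV {n : ℕ} (G : SimpleGraph (Fin n)) [DecidableRel G.Adj]
    (d t : ℕ) : ℝ :=
  sSup {x : ℝ | ∃ p : Fin n → ℝ, IsProbDist p ∧
    x = tvFromUniform ((walkMatrix G d ^ t).mulVec p)}

/-- The `ε`-mixing time `τ_ε(P)`. -/
noncomputable def mixingTime {n : ℕ} (G : SimpleGraph (Fin n)) [DecidableRel G.Adj]
    (d : ℕ) (ε : ℝ) : ℕ :=
  sInf {t : ℕ | dTV G d t ≤ ε}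

/-- `|E(S,T)|`: the number of ordered edges `(u,v)` with `u ∈ S`, `v ∈ T`, `uv ∈ E`. -/
def bipCount {n : ℕ} (G : SimpleGraph (Fin n)) [DecidableRel G.Adj]
    (S T : Finset (Fin n)) : ℕ :=
  ((S ×ˢ T).filter (fun e => G.Adj e.1 e.2)).card

/-- The `α`-bipartite density condition. -/
def BipDensity {n : ℕ} (G : SimpleGraph (Fin n)) [DecidableRel G.Adj]
    (d : ℕ) (α : ℝ) : Prop :=
  ∀ S T : Finset (Fin n),
    (bipCount G S T : ℝ) ≤ d * S.card * T.card / n + α * Real.sqrt (S.card * T.card)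

/-- The `δ`-small-set `α`-bipartite density condition. -/
def SmallSetBipDensity {n : ℕ} (G : SimpleGraph (Fin n)) [DecidableRel G.Adj]
    (d : ℕ) (α δ : ℝ) : Prop :=
  ∀ S T : Finset (Fin n), (S.card : ℝ) ≤ δ * n → (T.card : ℝ) ≤ δ * n →
    (bipCount G S T : ℝ) ≤ d * S.card * T.card / n + α * Real.sqrt (S.card * T.card)

/-- Cauchy-Schwarz for two terms. -/
lemma sqrt_mul_add_mul_le {A B u v : ℝ} (hA : 0 ≤ A) (hB : 0 ≤ B) :
    √(A * B) + u * v ≤ √((A + u ^ 2) * (B + v ^ 2)) := by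
  apply Real.le_sqrt_of_sq_le
  rw [Real.sqrt_mul hA]
  have h1 : (√A * v - √B * u) ^ 2 = A * v ^ 2 + B * u ^ 2 - 2 * (√A * √B) * (u * v) := by
    linear_combination v ^ 2 * Real.sq_sqrt hA + u ^ 2 * Real.sq_sqrt hB
  have h2 : (√A * √B) ^ 2 = A * B := by rw [mul_pow, Real.sq_sqrt hA, Real.sq_sqrt hB]
  linarith [sq_nonneg (√A * v - √B * u), add_sq (√A * √B) (u * v)]

/-- The increments of the square root are at most `1 / √(k + 1)`. -/
lemma sqrt_succ_sub_sqrt_le (k : ℕ) : √((k : ℝ) + 1) - √k ≤ (√((k : ℝ) + 1))⁻¹ := by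
  have h0 : 0 < √((k : ℝ) + 1) := Real.sqrt_pos.2 (by positivity)
  have h1 : √(k : ℝ) ≤ √((k : ℝ) + 1) := Real.sqrt_le_sqrt (by linarith)
  have h2 : √((k : ℝ) + 1) ^ 2 = k + 1 := Real.sq_sqrt (by positivity)
  have h3 : √(k : ℝ) ^ 2 = k := Real.sq_sqrt (by positivity)
  rw [← one_div, le_div_iff₀ h0]
  nlinarith [Real.sqrt_nonneg (k : ℝ)]

/-- A bound for the sums over small sets extends to all sets, at the cost of a linear term. -/
lemma sum_le_of_small_sum_le {ι : Type*} [DecidableEq ι] {c : ι → ℝ} {a b : ℝ} {m : ℕ}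
    (hm : 0 < m) (hb : 0 ≤ b)
    (h : ∀ S : Finset ι, S.card ≤ m → ∑ v ∈ S, c v ≤ a * S.card + b * √(S.card : ℝ))
    (S : Finset ι) :
    ∑ v ∈ S, c v ≤ a * S.card + b * (√(S.card : ℝ) + S.card / √(m : ℝ)) := by
  induction S using Finset.strongInduction with
  | H S ih =>
    have hm' : 0 < √(m : ℝ) := Real.sqrt_pos.2 (by exact_mod_cast hm)
    by_cases hS : S.card ≤ m
    · have h1 := h S hS
      have h2 : 0 ≤ b * (S.card / √(m : ℝ)) := by positivity
      linarith
    · obtain ⟨T, hTS, hT⟩ := exists_subset_card_eq (le_of_not_ge hS)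
      have hTne : T.Nonempty := card_pos.1 (by omega)
      have h1 := h T hT.le
      have h2 := ih (S \ T) (sdiff_ssubset hTS hTne)
      have h3 : ((S \ T).card : ℝ) = S.card - m := by
        rw [card_sdiff_of_subset hTS, hT, Nat.cast_sub (le_of_not_ge hS)]
      have h4 := sum_sdiff (f := c) hTS
      have h5 : √((S.card : ℝ) - m) ≤ √(S.card : ℝ) :=
        Real.sqrt_le_sqrt (by linarith [(Nat.cast_nonneg m : (0 : ℝ) ≤ m)])
      have h6 : (m : ℝ) / √(m : ℝ) = √(m : ℝ) := Real.div_sqrt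
      rw [hT] at h1
      rw [h3, sub_div, h6] at h2
      nlinarith [mul_le_mul_of_nonneg_left h5 hb]

/-- Summation by parts in decreasing order of `f`: bounds on the sums of `c` over sets give a
bound on the pairing of `c` with a nonnegative function. -/
lemma sum_mul_le_of_sum_le {ι : Type*} [DecidableEq ι] {c f : ι → ℝ} {a b : ℝ}
    (hb : 0 ≤ b)
    (h : ∀ S : Finset ι, ∑ v ∈ S, c v ≤ a * S.card + b * √(S.card : ℝ))
    (S : Finset ι) : ∀ y : ℝ, 0 ≤ y → (∀ v ∈ S, y ≤ f v) →
    ∑ v ∈ S, c v * f v ≤ a * ∑ v ∈ S, f v + b * √((harmonic S.card : ℝ) * ∑ v ∈ S, f v ^ 2) +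
      y * (∑ v ∈ S, c v - (a * S.card + b * √(S.card : ℝ))) := by
  induction S using Finset.induction_on_min_value f with
  | empty => intro y _ _; simp
  | insert v S hv hmin ih =>
    intro y hy hyS
    have hyv : y ≤ f v := hyS v (mem_insert_self v S)
    have h1 := ih (f v) (hy.trans hyv) hmin
    have h2 := h (insert v S)
    rw [sum_insert hv, card_insert_of_notMem hv] at h2 ⊢
    rw [sum_insert hv, sum_insert hv, sum_insert hv]
    have h3 : 0 ≤ (harmonic S.card : ℝ) := by
      unfold harmonic; push_cast; positivity
    have h4 := sqrt_mul_add_mul_le (u := (√((S.card : ℝ) + 1))⁻¹) (v := f v) h3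
      (sum_nonneg fun w (_ : w ∈ S) => sq_nonneg (f w))
    have h5 : (harmonic S.card : ℝ) + (√((S.card : ℝ) + 1))⁻¹ ^ 2 =
        (harmonic (S.card + 1) : ℝ) := by
      rw [harmonic_succ, inv_pow, Real.sq_sqrt (by positivity)]; push_cast; rfl
    rw [h5, add_comm _ (f v ^ 2)] at h4
    have h6 := mul_le_mul_of_nonneg_right (sqrt_succ_sub_sqrt_le S.card) (hy.trans hyv)
    have h7 := mul_le_mul_of_nonneg_left (h4.trans' (add_le_add_right h6 _)) hb
    push_cast at h2 ⊢
    nlinarith [mul_nonneg (sub_nonneg.2 hyv) (sub_nonneg.2 h2)]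

/-- Pairing bound from sums over small sets. -/
lemma sum_mul_le_of_small_sum_le {ι : Type*} [Fintype ι] {c f : ι → ℝ}
    {a b : ℝ} {m : ℕ} (hm : 0 < m) (hb : 0 ≤ b) (hf : ∀ v, 0 ≤ f v)
    (h : ∀ S : Finset ι, S.card ≤ m → ∑ v ∈ S, c v ≤ a * S.card + b * √(S.card : ℝ)) :
    ∑ v, c v * f v ≤ a * ∑ v, f v +
      b * (√((harmonic (Fintype.card ι) : ℝ) * ∑ v, f v ^ 2) + (∑ v, f v) / √(m : ℝ)) := by
  classical
  have h1 := sum_mul_le_of_sum_le (f := f) (a := a + b / √(m : ℝ)) hb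
    (fun S => (sum_le_of_small_sum_le hm hb h S).trans_eq (by ring)) univ 0 le_rfl
    (fun v _ => hf v)
  rw [card_univ] at h1
  refine h1.trans_eq ?_
  ring

section Walk

variable {n : ℕ} (G : SimpleGraph (Fin n)) [DecidableRel G.Adj]

lemma bipCount_eq_sum (S T : Finset (Fin n)) :
    (bipCount G S T : ℝ) = ∑ v ∈ T, ∑ u ∈ S, G.adjMatrix ℝ u v := by
  rw [bipCount, card_filter, sum_product, sum_comm]
  push_cast
  simp [SimpleGraph.adjMatrix_apply]

/-- The expander mixing bound for nonnegative functions. -/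
lemma sum_mul_adjMatrix_mulVec_le {d m : ℕ} {α δ : ℝ} (hα : 0 ≤ α) (hm : 0 < m)
    (hmδ : (m : ℝ) ≤ δ * n) (h : SmallSetBipDensity G d α δ) {f g : Fin n → ℝ}
    (hf : ∀ v, 0 ≤ f v) (hg : ∀ v, 0 ≤ g v) :
    ∑ u, (G.adjMatrix ℝ).mulVec g u * f u ≤ d / n * (∑ v, g v) * ∑ v, f v +
      α * (√((harmonic n : ℝ) * ∑ v, g v ^ 2) + (∑ v, g v) / √(m : ℝ)) *
        (√((harmonic n : ℝ) * ∑ v, f v ^ 2) + (∑ v, f v) / √(m : ℝ)) := by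
  have hg' : 0 ≤ ∑ v, g v := sum_nonneg fun v _ => hg v
  have key := sum_mul_le_of_small_sum_le (c := (G.adjMatrix ℝ).mulVec g) (f := f)
    (a := d / n * ∑ v, g v)
    (b := α * (√((harmonic n : ℝ) * ∑ v, g v ^ 2) + (∑ v, g v) / √(m : ℝ))) hm
    (by positivity) hf ?_
  · rwa [Fintype.card_fin] at key
  intro S hS
  have key2 := sum_mul_le_of_small_sum_le (c := fun v => ∑ u ∈ S, G.adjMatrix ℝ u v) (f := g)
    (a := d / n * S.card) (b := α * √(S.card : ℝ)) hm (by positivity) hg ?_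
  · rw [Fintype.card_fin] at key2
    have : ∑ u ∈ S, (G.adjMatrix ℝ).mulVec g u =
        ∑ v, (∑ u ∈ S, G.adjMatrix ℝ u v) * g v := by
      simp only [Matrix.mulVec, dotProduct, sum_mul]
      rw [sum_comm]
    rw [this]
    refine key2.trans_eq ?_
    ring
  intro T hT
  have hcast : ∀ k : ℕ, k ≤ m → (k : ℝ) ≤ δ * n := fun k hk =>
    le_trans (by exact_mod_cast hk) hmδ
  have h1 := h S T (hcast _ hS) (hcast _ hT)
  rw [bipCount_eq_sum, Real.sqrt_mul (by positivity)] at h1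
  refine h1.trans_eq ?_
  ring

variable {G} {d : ℕ}

lemma walkMatrix_mulVec_apply (p : Fin n → ℝ) (v : Fin n) :
    (walkMatrix G d).mulVec p v = (d : ℝ)⁻¹ * (G.adjMatrix ℝ).mulVec p v := by
  simp [walkMatrix, Matrix.smul_mulVec]

lemma sum_adjMatrix_mulVec (hG : G.IsRegularOfDegree d) (p : Fin n → ℝ) :
    ∑ u, (G.adjMatrix ℝ).mulVec p u = d * ∑ v, p v := by
  simp only [Matrix.mulVec, dotProduct]
  rw [sum_comm, mul_sum]
  refine sum_congr rfl fun v _ => ?_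
  rw [← sum_mul]
  congr 1
  simp_rw [SimpleGraph.adjMatrix_apply, G.adj_comm _ v]
  rw [sum_boole, ← SimpleGraph.neighborFinset_eq_filter, SimpleGraph.card_neighborFinset_eq_degree,
    hG v]

lemma IsProbDist.walkMatrix_mulVec (hG : G.IsRegularOfDegree d) (hd : 0 < d)
    {p : Fin n → ℝ} (hp : IsProbDist p) : IsProbDist ((walkMatrix G d).mulVec p) := by
  have hd' : (d : ℝ) ≠ 0 := by positivity
  constructor
  · intro v
    rw [walkMatrix_mulVec_apply]
    rw [SimpleGraph.adjMatrix_mulVec_apply]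
    exact mul_nonneg (by positivity) (sum_nonneg fun u _ => hp.1 u)
  · simp_rw [walkMatrix_mulVec_apply]
    rw [← mul_sum, sum_adjMatrix_mulVec hG, hp.2]
    field_simp

lemma sum_sq_walkMatrix_mulVec_le (hG : G.IsRegularOfDegree d) (hd : 0 < d) (p : Fin n → ℝ) :
    ∑ v, (walkMatrix G d).mulVec p v ^ 2 ≤ ∑ v, p v ^ 2 := by
  have hd' : (0 : ℝ) < d := by positivity
  have h1 : ∀ v, (walkMatrix G d).mulVec p v ^ 2 ≤
      (d : ℝ)⁻¹ * (G.adjMatrix ℝ).mulVec (fun u => p u ^ 2) v := by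
    intro v
    rw [walkMatrix_mulVec_apply, SimpleGraph.adjMatrix_mulVec_apply,
      SimpleGraph.adjMatrix_mulVec_apply]
    have := sq_sum_le_card_mul_sum_sq (s := G.neighborFinset v) (f := p)
    rw [SimpleGraph.card_neighborFinset_eq_degree, hG v] at this
    rw [mul_pow]
    calc (d : ℝ)⁻¹ ^ 2 * (∑ u ∈ G.neighborFinset v, p u) ^ 2
        ≤ (d : ℝ)⁻¹ ^ 2 * (d * ∑ u ∈ G.neighborFinset v, p u ^ 2) := by gcongr
      _ = _ := by field_simp
  refine (sum_le_sum fun v _ => h1 v).trans_eq ?_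
  rw [← mul_sum, sum_adjMatrix_mulVec hG]
  field_simp

/-- One step of the random walk contracts the squared 2-norm up to an additive `O(1/n)`. -/
lemma sum_sq_walkMatrix_mulVec_le_of_density {m : ℕ} {α δ : ℝ} (hG : G.IsRegularOfDegree d)
    (hd : 0 < d) (hα : 0 ≤ α) (hm : 0 < m) (hmδ : (m : ℝ) ≤ δ * n)
    (h : SmallSetBipDensity G d α δ) {p : Fin n → ℝ} (hp : IsProbDist p) :
    ∑ v, (walkMatrix G d).mulVec p v ^ 2 ≤
      1 / n + α / d * (2 * harmonic n * ∑ v, p v ^ 2 + 2 / m) := by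
  have hd' : (0 : ℝ) < d := by positivity
  have hr := hp.walkMatrix_mulVec hG hd
  have h1 := sum_mul_adjMatrix_mulVec_le G hα hm hmδ h hr.1 hp.1
  have hle := sum_sq_walkMatrix_mulVec_le hG hd p
  rw [hr.2, hp.2] at h1
  have hH : 0 ≤ (harmonic n : ℝ) := by unfold harmonic; push_cast; positivity
  set Q := ∑ v, p v ^ 2 with hQ
  have hQ0 : 0 ≤ Q := sum_nonneg fun v _ => sq_nonneg _
  have h2 : √((harmonic n : ℝ) * ∑ v, (walkMatrix G d).mulVec p v ^ 2) ≤
      √((harmonic n : ℝ) * Q) := Real.sqrt_le_sqrt (by gcongr)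
  have h4 : ∑ u, (G.adjMatrix ℝ).mulVec p u * (walkMatrix G d).mulVec p u =
      d * ∑ v, (walkMatrix G d).mulVec p v ^ 2 := by
    rw [mul_sum]
    refine sum_congr rfl fun v _ => ?_
    rw [walkMatrix_mulVec_apply]
    field_simp
  rw [h4] at h1
  have h5 : (√((harmonic n : ℝ) * Q) + 1 / √(m : ℝ)) ^ 2 ≤ 2 * harmonic n * Q + 2 / m := by
    have e1 : √((harmonic n : ℝ) * Q) ^ 2 = harmonic n * Q := Real.sq_sqrt (by positivity)
    have e2 : (1 / √(m : ℝ)) ^ 2 = 1 / m := by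
      rw [div_pow, Real.sq_sqrt (by positivity), one_pow]
    have e3 : (2 : ℝ) / m = 2 * (1 / m) := by ring
    rw [e3]
    nlinarith [sq_nonneg (√((harmonic n : ℝ) * Q) - 1 / √(m : ℝ))]
  have h6 : d * ∑ v, (walkMatrix G d).mulVec p v ^ 2 ≤
      d / n + α * (2 * harmonic n * Q + 2 / m) := by
    refine h1.trans ?_
    rw [mul_one, mul_one, mul_assoc]
    refine add_le_add_right (mul_le_mul_of_nonneg_left (h5.trans' ?_) hα) _
    rw [sq]
    gcongr
  rw [← le_div_iff₀' hd'] at h6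
  refine h6.trans_eq ?_
  field_simp

/-- Iterating a one-step contraction. -/
lemma sum_sq_walkMatrix_pow_mulVec_le {K ε : ℝ} (hG : G.IsRegularOfDegree d) (hd : 0 < d)
    (hε : 0 ≤ ε) (hε1 : ε < 1) (hK : 0 ≤ K)
    (h : ∀ p : Fin n → ℝ, IsProbDist p →
      ∑ v, (walkMatrix G d).mulVec p v ^ 2 ≤ K + ε * ∑ v, p v ^ 2)
    {p : Fin n → ℝ} (hp : IsProbDist p) (t : ℕ) :
    IsProbDist ((walkMatrix G d ^ t).mulVec p) ∧
      ∑ v, (walkMatrix G d ^ t).mulVec p v ^ 2 ≤ K / (1 - ε) + ε ^ t := by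
  have h1 : 0 < 1 - ε := by linarith
  induction t with
  | zero =>
    rw [pow_zero, Matrix.one_mulVec, pow_zero]
    refine ⟨hp, ?_⟩
    have h2 : ∑ v, p v ^ 2 ≤ (∑ v, p v) ^ 2 := sum_sq_le_sq_sum_of_nonneg fun v _ => hp.1 v
    rw [hp.2] at h2
    have : 0 ≤ K / (1 - ε) := by positivity
    linarith
  | succ t ih =>
    rw [pow_succ', ← Matrix.mulVec_mulVec]
    refine ⟨ih.1.walkMatrix_mulVec hG hd, (h _ ih.1).trans ?_⟩
    calc K + ε * ∑ v, (walkMatrix G d ^ t).mulVec p v ^ 2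
        ≤ K + ε * (K / (1 - ε) + ε ^ t) := by gcongr; exact ih.2
      _ = K / (1 - ε) + ε ^ (t + 1) := by field_simp; ring

/-- The one-step contraction when `α / d = ε ^ 4`, with sets of size up to `δ * n` allowed. -/
lemma sum_sq_walkMatrix_mulVec_le_of_pow_four {α δ ε : ℝ} (hG : G.IsRegularOfDegree d)
    (hd0 : 0 < d) (hα0 : 0 < α) (hε0 : 0 < ε) (hε4 : ε ^ 4 = α / d) (hε14 : ε ≤ 1 / 4)
    (hL1 : 1 ≤ Real.log n) (hεL : ε ^ 2 * Real.log n ≤ 1) (hδ : 0 < δ) (hδ1 : δ ≤ 1)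
    (hδα : 256 * α / d ≤ δ) (hδn : 1 ≤ δ * n) (hdens : SmallSetBipDensity G d α δ)
    {p : Fin n → ℝ} (hp : IsProbDist p) :
    ∑ v, (walkMatrix G d).mulVec p v ^ 2 ≤
      (δ + (5 / 4) * (1 - δ) + 8 * ε) / n + ε * ∑ v, p v ^ 2 := by
  have hnpos : (0 : ℝ) < n := by
    by_contra! h
    nlinarith
  have hH : (harmonic n : ℝ) ≤ 2 * Real.log n := by
    linarith [harmonic_le_one_add_log n]
  have hm : 0 < ⌊δ * n⌋₊ := Nat.floor_pos.2 hδn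
  have hm' : δ * n / 2 ≤ (⌊δ * n⌋₊ : ℝ) := by
    have h1 := Nat.lt_floor_add_one (δ * n)
    have h2 : (1 : ℝ) ≤ (⌊δ * n⌋₊ : ℝ) := by exact_mod_cast hm
    linarith
  have herr : α / d * (2 / (⌊δ * n⌋₊ : ℝ)) ≤ ((1 - δ) / 4 + 8 * ε) / n := by
    have h1 : α / d * (2 / (⌊δ * n⌋₊ : ℝ)) ≤ α / d * (2 / (δ * n / 2)) := by gcongr
    refine h1.trans ?_
    rw [← hε4]
    have h2 : ε ^ 4 * (2 / (δ * n / 2)) = 4 * ε ^ 4 / δ / n := by field_simp; ring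
    rw [h2]
    gcongr
    rw [div_le_iff₀ hδ]
    have h3 : 256 * ε ^ 4 ≤ δ := by
      rw [hε4]; linarith [mul_div_assoc 256 α (d : ℝ)]
    have h4 : ε ^ 4 ≤ ε := pow_le_of_le_one hε0.le (by linarith) (by norm_num)
    rcases le_total δ (1 / 2) with h | h <;> nlinarith
  have h1 := sum_sq_walkMatrix_mulVec_le_of_density hG hd0 hα0.le hm
    (Nat.floor_le (by positivity)) hdens hp
  have hQ : 0 ≤ ∑ v, p v ^ 2 := sum_nonneg fun v _ => sq_nonneg _
  have h2 : α / d * (2 * harmonic n) ≤ ε := by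
    rw [← hε4]
    calc ε ^ 4 * (2 * harmonic n) ≤ ε ^ 4 * (2 * (2 * Real.log n)) := by gcongr
      _ = 4 * ε ^ 2 * (ε ^ 2 * Real.log n) := by ring
      _ ≤ 4 * ε ^ 2 * 1 := by gcongr
      _ ≤ ε := by nlinarith
  have h3 := mul_le_mul_of_nonneg_right h2 hQ
  have h4 : (δ + (5 / 4) * (1 - δ) + 8 * ε) / n = 1 / n + ((1 - δ) / 4 + 8 * ε) / (n : ℝ) := by
    ring
  rw [h4]
  linarith

/-- Summing the geometric series of additive errors costs only an additive `O(ε)`. -/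
lemma div_one_sub_le {A ε : ℝ} (hA : A ≤ 5 / 4) (hε0 : 0 ≤ ε) (hε14 : ε ≤ 1 / 4) :
    (A + 8 * ε) / (1 - ε) ≤ A + 14 * ε := by
  rw [div_le_iff₀ (by linarith)]
  have h1 : 0 ≤ ε * (6 - A - 14 * ε) := mul_nonneg hε0 (by linarith)
  linarith

end Walk

/-- after `t ≥ 4/(cξ) + 1` steps the squared 2-norm drops to
about `C_δ/n`. -/
theorem two_norm_after_many_steps_of_small_set_bipartite_density :
    ∃ C₀ C₁ : ℝ, 0 < C₀ ∧ 0 < C₁ ∧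
      ∀ (ξ : ℝ) (n d : ℕ) (G : SimpleGraph (Fin n)) [DecidableRel G.Adj] (α δ : ℝ),
        0 < ξ → ξ ≤ 1 →
        G.IsRegularOfDegree d →
        (d : ℝ) = (n : ℝ) ^ ξ →
        Real.sqrt d < α → α ≤ d →
        α ≤ ξ ^ 2 * d / Real.log d ^ 2 →
        0 < δ → δ ≤ 1 → C₀ * α / d ≤ δ →
        SmallSetBipDensity G d α δ →
        ∀ p₀ : Fin n → ℝ, IsProbDist p₀ →
          ∀ t : ℕ, 4 / ((1 - Real.log α / Real.log d) * ξ) + 1 ≤ (t : ℝ) →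
            ∑ v, ((walkMatrix G d ^ t).mulVec p₀ v) ^ 2 ≤
              (δ + (5 / 4) * (1 - δ)) / n +
                C₁ / (n : ℝ) ^ (1 + (1 - Real.log α / Real.log d) * ξ / 4) := by
  refine ⟨256, 15, by norm_num, by norm_num, ?_⟩
  intro ξ n d G _ α δ hξ hξ1 hG hdn hα hαd hαlog hδ hδ1 hδα hdens p₀ hp₀ t ht
  have hα0 : 0 < α := (Real.sqrt_nonneg _).trans_lt hα
  have hd0 : 0 < d := by
    rcases Nat.eq_zero_or_pos d with rfl | h
    · simp only [Nat.cast_zero] at hαd; linarith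
    · exact h
  have hd1 : d ≠ 1 := by
    rintro rfl
    simp only [Nat.cast_one, Real.log_one] at hαlog
    norm_num at hαlog
    linarith
  have hdR : (2 : ℝ) ≤ d := by
    have : 2 ≤ d := by omega
    exact_mod_cast this
  have hn0 : n ≠ 0 := by
    rintro rfl
    rw [Nat.cast_zero, Real.zero_rpow hξ.ne'] at hdn
    linarith
  have hdltn : d < n := by
    have := G.degree_lt_card_verts (⟨0, Nat.pos_of_ne_zero hn0⟩ : Fin n)
    rwa [hG, Fintype.card_fin] at this
  have hn3 : (3 : ℝ) ≤ n := by
    have : 3 ≤ n := by omega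
    exact_mod_cast this
  have hnpos : (0 : ℝ) < n := by linarith
  have hdpos : (0 : ℝ) < d := by linarith
  have hdltnR : (d : ℝ) < n := by exact_mod_cast hdltn
  have hL1 : 1 ≤ Real.log n := by
    rw [Real.le_log_iff_exp_le hnpos]
    linarith [Real.exp_one_lt_d9]
  have hlogd : Real.log d = ξ * Real.log n := by rw [hdn, Real.log_rpow hnpos]
  have hlogdpos : 0 < Real.log d := Real.log_pos (by linarith)
  have hx256 : α / d ≤ 1 / 256 := by
    rw [mul_div_assoc] at hδα
    linarith
  have hαltd : α < d := by
    rw [div_le_iff₀ hdpos] at hx256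
    linarith
  set c : ℝ := 1 - Real.log α / Real.log d with hc
  have hclog : c * Real.log d = Real.log d - Real.log α := by rw [hc]; field_simp
  have hcpos : 0 < c := by
    have := Real.log_lt_log hα0 hαltd
    exact pos_of_mul_pos_left (by rw [hclog]; linarith) hlogdpos.le
  set ε : ℝ := Real.exp (-(c / 4 * Real.log d)) with hε
  have hε0 : 0 < ε := Real.exp_pos _
  have hε4 : ε ^ 4 = α / d := by
    rw [hε, ← Real.exp_nat_mul, ← Real.exp_log (div_pos hα0 hdpos), Real.log_div hα0.ne' hdpos.ne']
    congr 1
    push_cast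
    linarith
  have hε14 : ε ≤ 1 / 4 := by
    refine le_of_pow_le_pow_left₀ (n := 4) (by norm_num) (by norm_num) ?_
    rw [hε4]
    norm_num at hx256 ⊢
    exact hx256
  have hεL : ε ^ 2 * Real.log n ≤ 1 := by
    refine le_of_pow_le_pow_left₀ (n := 2) (by norm_num) (by norm_num) ?_
    rw [mul_pow, ← pow_mul, hε4, one_pow, div_mul_eq_mul_div, div_le_one hdpos]
    rw [hlogd, mul_pow, mul_div_mul_left _ _ (by positivity), le_div_iff₀ (by positivity)] at hαlog
    exact hαlog
  have hδn : 1 ≤ δ * n := by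
    have h1 : 256 * α ≤ δ * d := by rwa [div_le_iff₀ hdpos] at hδα
    have h2 : 1 ≤ √(d : ℝ) := Real.one_le_sqrt.2 (by linarith)
    nlinarith
  have hstep := fun p (hp : IsProbDist p) => sum_sq_walkMatrix_mulVec_le_of_pow_four hG hd0 hα0
    hε0 hε4 hε14 hL1 hεL hδ hδ1 hδα hδn hdens hp
  have hmain := (sum_sq_walkMatrix_pow_mulVec_le hG hd0 hε0.le (by linarith)
    (by have : 0 ≤ 1 - δ := by linarith
        positivity) hstep hp₀ t).2
  refine hmain.trans ?_
  have hpow : (n : ℝ) ^ (1 + c * ξ / 4) = n / ε := by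
    rw [Real.rpow_add hnpos, Real.rpow_one, div_eq_mul_inv (n : ℝ) ε, hε, ← Real.exp_neg,
      Real.rpow_def_of_pos hnpos, hlogd]
    congr 2
    ring
  have hεt : ε ^ t ≤ ε / n := by
    rw [hε, ← Real.exp_nat_mul, le_div_iff₀ hnpos]
    refine (congrArg (_ * ·) (Real.exp_log hnpos).symm).trans_le ?_
    rw [← Real.exp_add, Real.exp_le_exp]
    have h1 := mul_le_mul_of_nonneg_right ht (show 0 ≤ c / 4 * Real.log d by positivity)
    have h2 : (4 / (c * ξ) + 1) * (c / 4 * Real.log d) = Real.log n + c / 4 * Real.log d := by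
      rw [hlogd]; field_simp
    linarith
  have hgeom : (δ + (5 / 4) * (1 - δ) + 8 * ε) / n / (1 - ε) ≤
      (δ + (5 / 4) * (1 - δ) + 14 * ε) / n := by
    rw [div_right_comm]
    gcongr
    exact div_one_sub_le (by linarith) hε0.le hε14
  rw [hpow]
  have hfin : 15 / (n / ε) = 14 * ε / n + ε / n := by field_simp; ring
  rw [hfin]
  rw [add_div _ (14 * ε)] at hgeom
  linarith
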